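/- arXiv:2306.05154 — 2 statements merged into one kernel-verified Lean document; each statement's English description precedes it below -/
import Mathlib

section
/- Let f₁, …, f_k be signomials on ℝⁿ_{>0} and set S(f₁, …, f_k) = ⋂_{i=1}^{k} f_i^{-1}(ℝ_{<0}). Then the actual negative normal cone is contained in the real tropicalization: Σ(f₁, …, f_k) ⊆ Trop(S(f₁, …, f_k)). -/
/-- A signomial on the positive orthant `ℝⁿ_{>0}`: a function
`x ↦ ∑_{μ ∈ supp} coeff μ * x ^ μ` with finite support and nonzero coefficients. -/
structure Signomial (n : ℕ) where
  supp : Finset (Fin n → ℝ)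
  coeff : (Fin n → ℝ) → ℝ
  coeff_ne_zero : ∀ μ ∈ supp, coeff μ ≠ 0
  coeff_eq_zero : ∀ μ ∉ supp, coeff μ = 0

namespace Signomial

variable {n : ℕ}

/-- The monomial `x^μ = ∏ i, x i ^ μ i` (real exponents). -/
noncomputable def mono (x μ : Fin n → ℝ) : ℝ := ∏ i, x i ^ μ i

/-- Evaluation of a signomial. -/
noncomputable def eval (f : Signomial n) (x : Fin n → ℝ) : ℝ :=
  ∑ μ ∈ f.supp, f.coeff μ * mono x μ

open Classical in
/-- Evaluation of the restriction `f_{|S}` of `f` to a set `S ⊆ ℝⁿ`. -/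
noncomputable def evalOn (f : Signomial n) (S : Set (Fin n → ℝ)) (x : Fin n → ℝ) : ℝ :=
  ∑ μ ∈ f.supp, if μ ∈ S then f.coeff μ * mono x μ else 0

/-- The Newton polytope `N(f) = conv(σ(f))`. -/
def newton (f : Signomial n) : Set (Fin n → ℝ) :=
  convexHull ℝ (f.supp : Set (Fin n → ℝ))

/-- Euclidean scalar product on `Fin n → ℝ`. -/
noncomputable def dot (v μ : Fin n → ℝ) : ℝ := ∑ i, v i * μ i

/-- The face `N(f)_v` of the Newton polytope cut out by `v`. -/
def faceAt (f : Signomial n) (v : Fin n → ℝ) : Set (Fin n → ℝ) :=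
  {μ ∈ f.newton | ∀ ν ∈ f.newton, dot v ν ≤ dot v μ}

/-- `F` is a (nonempty, exposed) face of the Newton polytope of `f`. -/
def IsFace (f : Signomial n) (F : Set (Fin n → ℝ)) : Prop :=
  F.Nonempty ∧ ∃ v, F = f.faceAt v

/-- The (outer) normal cone of a face `F` of `N(f)`. -/
def normalCone (f : Signomial n) (F : Set (Fin n → ℝ)) : Set (Fin n → ℝ) :=
  {v | F ⊆ f.faceAt v}

/-- The negative normal cone `N_f^- = {v | N(f)_v ∩ σ₋(f) ≠ ∅}`. -/
def negCone (f : Signomial n) : Set (Fin n → ℝ) :=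
  {v | ∃ μ ∈ f.supp, f.coeff μ < 0 ∧ μ ∈ f.faceAt v}

/-- The positive orthant `ℝⁿ_{>0}`. -/
def posOrth (n : ℕ) : Set (Fin n → ℝ) := {x | ∀ i, 0 < x i}

/-- `S(f) = f⁻¹(ℝ_{<0})` (inside the positive orthant). -/
def negSet₁ (f : Signomial n) : Set (Fin n → ℝ) :=
  {x ∈ posOrth n | f.eval x < 0}

/-- `S(f₁, …, f_k) = ⋂ᵢ fᵢ⁻¹(ℝ_{<0})` (inside the positive orthant). -/
def negSet {k : ℕ} (f : Fin k → Signomial n) : Set (Fin n → ℝ) :=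
  {x ∈ posOrth n | ∀ i, (f i).eval x < 0}

/-- The actual negative normal cone `Σ(f)` of a single signomial. -/
def actualNegCone₁ (f : Signomial n) : Set (Fin n → ℝ) :=
  {v | ∃ x ∈ posOrth n, f.evalOn (f.faceAt v) x < 0}

/-- The actual negative normal cone `Σ(f₁, …, f_k)`. -/
def actualNegCone {k : ℕ} (f : Fin k → Signomial n) : Set (Fin n → ℝ) :=
  {v | ∃ x ∈ posOrth n, ∀ i, (f i).evalOn ((f i).faceAt v) x < 0}

/-- The real tropicalization (logarithmic limit set) of `S ⊆ ℝⁿ_{>0}`: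
`w ∈ Trop(S)` iff there are sequences `x(m) ∈ S`, `t(m) ∈ (1,∞)` with `t(m) → ∞` and
`Log_{t(m)}(x(m)) → w`. -/
def trop (S : Set (Fin n → ℝ)) : Set (Fin n → ℝ) :=
  {w | ∃ (x : ℕ → Fin n → ℝ) (t : ℕ → ℝ),
    (∀ m, x m ∈ S) ∧ (∀ m, 1 < t m) ∧
    Filter.Tendsto t Filter.atTop Filter.atTop ∧
    Filter.Tendsto (fun m i => Real.log (x m i) / Real.log (t m))
      Filter.atTop (nhds w)}

open Classical in
/-- The support of the restriction `f_{|F}`, i.e. `σ(f) ∩ F`. -/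
noncomputable def restSupp (f : Signomial n) (F : Set (Fin n → ℝ)) : Finset (Fin n → ℝ) :=
  f.supp.filter (fun μ => μ ∈ F)

/-- Evaluation of the signomial with coefficient vector `c ∈ ℝ^A`. -/
noncomputable def evalVec (A : Finset (Fin n → ℝ)) (c : A → ℝ) (x : Fin n → ℝ) : ℝ :=
  ∑ μ : A, c μ * mono x (μ : Fin n → ℝ)

/-- The nonnegativity cone `P⁺_A ⊆ ℝ^A`. -/
def nonnegConeSet (A : Finset (Fin n → ℝ)) : Set (A → ℝ) :=
  {c | ∀ x ∈ posOrth n, 0 ≤ evalVec A c x}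

/-- The coefficient vector of `f` viewed in `ℝ^A`. -/
def coeffVec (f : Signomial n) (A : Finset (Fin n → ℝ)) : A → ℝ :=
  fun μ => f.coeff μ

/-- The non-boundary condition (NB): for every face `F` of `N(f)`, if `f_{|F}` is
nonnegative on the positive orthant then it lies in the interior of the nonnegativity
cone `P⁺_{σ(f) ∩ F}`. -/
def NBcond (f : Signomial n) : Prop :=
  ∀ F : Set (Fin n → ℝ), f.IsFace F →
    coeffVec f (f.restSupp F) ∈ nonnegConeSet (f.restSupp F) →
    coeffVec f (f.restSupp F) ∈ interior (nonnegConeSet (f.restSupp F))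

end Signomial

/-!
For `x` in the positive orthant, the curve `t ↦ (x i * t ^ v i)ᵢ` tends to `v` in logarithmic
coordinates of base `t`. Along it the term of exponent `μ` is multiplied by `t ^ (v · μ)`, so the
terms on the face cut out by `v` dominate: a signomial divided by its leading power of `t` tends to
the value of its restriction to that face at `x`. If this value is negative for each of finitely
many signomials, the curve eventually stays in their common negative set.
-/

section

open Filter Topology

theorem tendsto_log_const_mul_rpow_div_log_atTop {c : ℝ} (hc : c ≠ 0) (a : ℝ) :
    Tendsto (fun t : ℝ => Real.log (c * t ^ a) / Real.log t) atTop (𝓝 a) := by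
  have hlim : Tendsto (fun t => Real.log c / Real.log t + a) atTop (𝓝 (0 + a)) :=
    (Real.tendsto_log_atTop.const_div_atTop _).add_const _
  rw [zero_add] at hlim
  refine hlim.congr' ?_
  filter_upwards [eventually_gt_atTop 1] with t ht
  have ht₀ : 0 < t := zero_lt_one.trans ht
  rw [Real.log_mul hc (Real.rpow_pos_of_pos ht₀ a).ne', Real.log_rpow ht₀, add_div,
    mul_div_cancel_right₀ _ (Real.log_pos ht).ne']

namespace Signomial

variable {n : ℕ} {f : Signomial n} {v w x μ ν : Fin n → ℝ} {t : ℝ}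

theorem exists_mem_of_evalOn_ne_zero {S : Set (Fin n → ℝ)} (h : f.evalOn S x ≠ 0) :
    ∃ μ ∈ f.supp, μ ∈ S := by
  classical
  obtain ⟨μ, hμ, hterm⟩ := Finset.exists_ne_zero_of_sum_ne_zero h
  exact ⟨μ, hμ, (ite_ne_right_iff.1 hterm).1⟩

theorem supp_subset_newton (f : Signomial n) : (f.supp : Set (Fin n → ℝ)) ⊆ f.newton :=
  subset_convexHull ℝ _

theorem dot_eq_of_mem_faceAt (hμ : μ ∈ f.faceAt v) (hν : ν ∈ f.faceAt v) :
    dot v μ = dot v ν :=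
  le_antisymm (hν.2 μ hμ.1) (hμ.2 ν hν.1)

theorem dot_lt_of_notMem_faceAt (hμ : μ ∈ f.newton) (hμv : μ ∉ f.faceAt v)
    (hν : ν ∈ f.faceAt v) : dot v μ < dot v ν := by
  by_contra! hle
  exact hμv ⟨hμ, fun ξ hξ => (hν.2 ξ hξ).trans hle⟩

/-- The curve `t ↦ (x i * t ^ v i)ᵢ` of direction `v` through `x` (its value at `t = 1`), used to
approach the direction `v` of the logarithmic limit set. -/
noncomputable def monomialCurve (x v : Fin n → ℝ) (t : ℝ) : Fin n → ℝ :=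
  fun i => x i * t ^ v i

theorem monomialCurve_mem_posOrth (hx : x ∈ posOrth n) (v : Fin n → ℝ) (ht : 0 < t) :
    monomialCurve x v t ∈ posOrth n :=
  fun i => mul_pos (hx i) (Real.rpow_pos_of_pos ht _)

theorem tendsto_log_monomialCurve_div_log (hx : x ∈ posOrth n) (v : Fin n → ℝ) :
    Tendsto (fun t i => Real.log (monomialCurve x v t i) / Real.log t) atTop (𝓝 v) :=
  tendsto_pi_nhds.2 fun i => tendsto_log_const_mul_rpow_div_log_atTop (hx i).ne' (v i)

theorem mono_monomialCurve (hx : 0 ≤ x) (v μ : Fin n → ℝ) (ht : 0 < t) :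
    mono (monomialCurve x v t) μ = mono x μ * t ^ dot v μ := by
  simp only [mono, dot, monomialCurve]
  rw [Real.rpow_sum_of_pos ht, ← Finset.prod_mul_distrib]
  refine Finset.prod_congr rfl fun i _ => ?_
  rw [Real.mul_rpow (hx i) (Real.rpow_nonneg ht.le _), Real.rpow_mul ht.le]

theorem eval_monomialCurve (f : Signomial n) (hx : 0 ≤ x) (v : Fin n → ℝ) (ht : 0 < t) :
    f.eval (monomialCurve x v t) = ∑ μ ∈ f.supp, f.coeff μ * mono x μ * t ^ dot v μ :=
  Finset.sum_congr rfl fun μ _ => by rw [mono_monomialCurve hx v μ ht, mul_assoc]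

theorem tendsto_eval_monomialCurve_div_rpow (hx : 0 ≤ x) (hν : ν ∈ f.faceAt v) :
    Tendsto (fun t => f.eval (monomialCurve x v t) / t ^ dot v ν) atTop
      (𝓝 (f.evalOn (f.faceAt v) x)) := by
  have hlim : Tendsto
      (fun t : ℝ => ∑ μ ∈ f.supp, f.coeff μ * mono x μ * t ^ (dot v μ - dot v ν)) atTop
      (𝓝 (f.evalOn (f.faceAt v) x)) := by
    refine tendsto_finsetSum _ fun μ hμ => ?_
    split_ifs with hμv
    · simp only [dot_eq_of_mem_faceAt hμv hν, sub_self, Real.rpow_zero, mul_one]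
      exact tendsto_const_nhds
    · have hlt : dot v μ < dot v ν :=
        dot_lt_of_notMem_faceAt (f.supp_subset_newton hμ) hμv hν
      simpa only [neg_sub, mul_zero] using
        (tendsto_rpow_neg_atTop (sub_pos.2 hlt)).const_mul (f.coeff μ * mono x μ)
  refine hlim.congr' ?_
  filter_upwards [eventually_gt_atTop 0] with t ht
  simp only [eval_monomialCurve f hx v ht, Finset.sum_div, Real.rpow_sub ht, mul_div_assoc]

theorem eventually_eval_monomialCurve_neg (hx : 0 ≤ x) (h : f.evalOn (f.faceAt v) x < 0) :
    ∀ᶠ t in atTop, f.eval (monomialCurve x v t) < 0 := by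
  obtain ⟨ν, -, hν⟩ := exists_mem_of_evalOn_ne_zero h.ne
  filter_upwards [(tendsto_eval_monomialCurve_div_rpow hx hν).eventually_lt_const h,
    eventually_gt_atTop 0] with t hneg ht
  exact neg_of_div_neg_left hneg (Real.rpow_nonneg ht.le _)

theorem mem_trop_of_frequently_mem {S : Set (Fin n → ℝ)} {γ : ℝ → Fin n → ℝ}
    (hγ : Tendsto (fun t i => Real.log (γ t i) / Real.log t) atTop (𝓝 w))
    (hS : ∃ᶠ t in atTop, γ t ∈ S) : w ∈ trop S := by
  obtain ⟨t, ht, hmem⟩ :=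
    exists_seq_forall_of_frequently (hS.and_eventually (eventually_gt_atTop 1))
  exact ⟨fun m => γ (t m), t, fun m => (hmem m).1, fun m => (hmem m).2, ht, hγ.comp ht⟩

theorem eventually_monomialCurve_mem_negSet {k : ℕ} {f : Fin k → Signomial n}
    (hx : x ∈ posOrth n) (h : ∀ i, (f i).evalOn ((f i).faceAt v) x < 0) :
    ∀ᶠ t in atTop, monomialCurve x v t ∈ negSet f := by
  have hneg : ∀ᶠ t in atTop, ∀ i, (f i).eval (monomialCurve x v t) < 0 :=
    eventually_all.2 fun i => eventually_eval_monomialCurve_neg (fun j => (hx j).le) (h i)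
  filter_upwards [hneg, eventually_gt_atTop 0] with t ht ht₀
  exact ⟨monomialCurve_mem_posOrth hx v ht₀, ht⟩

end Signomial

end

open Signomial in
/-- `Σ(f₁, …, f_k) ⊆ Trop(S(f₁, …, f_k))`. -/
theorem actualNegCone_subset_trop {n k : ℕ} (f : Fin k → Signomial n) :
    actualNegCone f ⊆ trop (negSet f) := by
  rintro v ⟨x, hx, hneg⟩
  exact mem_trop_of_frequently_mem (tendsto_log_monomialCurve_div_log hx v)
    (eventually_monomialCurve_mem_negSet hx hneg).frequently
end

section
/- Let f₁, …, f_k be signomials on ℝⁿ_{>0} and set S(f₁, …, f_k) = ⋂_{i=1}^{k} f_i^{-1}(ℝ_{<0}). Then the real tropicalization is contained in the intersection of the negative normal cones: Trop(S(f₁, …, f_k)) ⊆ ⋂_{i=1}^{k} N_{f_i}^-. -/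
/-!
If `f x < 0`, the largest monomial `x ^ μ` with negative coefficient bounds every other monomial of
`f` at `x`, up to a constant that does not depend on `x`. So `{f < 0}` is covered by finitely many
sets, one for each negative exponent `μ`, on which `|c_ν| * x ^ ν ≤ C * x ^ μ` for all exponents
`ν`. Tropicalization commutes with finite unions, and in the limit the multiplicative constants
disappear: the inequality becomes `w · ν ≤ w · μ`. If it holds for all `ν`, then `μ` lies on the
face of the Newton polytope cut out by `w`.
-/

theorem exists_neg_forall_abs_mul_le_of_sum_mul_neg {ι R : Type*} [Ring R] [LinearOrder R]
    [IsStrictOrderedRing R] {s : Finset ι} {c p : ι → R} (hp : ∀ i ∈ s, 0 ≤ p i)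
    (hsum : ∑ i ∈ s, c i * p i < 0) :
    ∃ i ∈ s, c i < 0 ∧ ∀ j ∈ s, |c j| * p j ≤ (∑ k ∈ s, |c k|) * p i := by
  have hne : {i ∈ s | c i < 0}.Nonempty := by
    by_contra! hempty
    have hc : ∀ i ∈ s, 0 ≤ c i := by simpa only [Finset.filter_eq_empty_iff, not_lt] using hempty
    exact hsum.not_ge (Finset.sum_nonneg fun i hi ↦ mul_nonneg (hc i hi) (hp i hi))
  obtain ⟨i, hi, hmax⟩ := Finset.exists_max_image _ p hne
  obtain ⟨his, hci⟩ := Finset.mem_filter.1 hi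
  have habs_nonneg : ∀ k ∈ s, 0 ≤ |c k| * p i := fun k _ ↦ mul_nonneg (abs_nonneg _) (hp i his)
  have hneg : ∀ k ∈ s, c k < 0 → |c k| * p k ≤ |c k| * p i := fun k hk hck ↦
    mul_le_mul_of_nonneg_left (hmax k (Finset.mem_filter.2 ⟨hk, hck⟩)) (abs_nonneg _)
  have hadd_nonneg : ∀ k ∈ s, 0 ≤ c k * p k + |c k| * p i := by
    intro k hk
    rcases lt_or_ge (c k) 0 with hck | hck
    · calc 0 ≤ |c k| * p i - |c k| * p k := sub_nonneg.2 (hneg k hk hck)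
        _ = c k * p k + |c k| * p i := by rw [abs_of_neg hck]; noncomm_ring
    · exact add_nonneg (mul_nonneg hck (hp k hk)) (habs_nonneg k hk)
  refine ⟨i, his, hci, fun j hj ↦ ?_⟩
  rw [Finset.sum_mul]
  rcases lt_or_ge (c j) 0 with hcj | hcj
  · exact (hneg j hj hcj).trans (Finset.single_le_sum habs_nonneg hj)
  · calc |c j| * p j = c j * p j := by rw [abs_of_nonneg hcj]
      _ ≤ c j * p j + |c j| * p i := le_add_of_nonneg_right (habs_nonneg j hj)
      _ ≤ ∑ k ∈ s, (c k * p k + |c k| * p i) := Finset.single_le_sum hadd_nonneg hj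
      _ = ∑ k ∈ s, c k * p k + ∑ k ∈ s, |c k| * p i := Finset.sum_add_distrib
      _ ≤ ∑ k ∈ s, |c k| * p i := add_le_of_nonpos_left hsum.le

namespace Signomial

open Filter Topology

variable {n : ℕ}

theorem mono_pos {x : Fin n → ℝ} (hx : x ∈ posOrth n) (μ : Fin n → ℝ) : 0 < mono x μ :=
  Finset.prod_pos fun i _ ↦ Real.rpow_pos_of_pos (hx i) _

theorem log_mono_div {x : Fin n → ℝ} (hx : x ∈ posOrth n) (μ : Fin n → ℝ) (L : ℝ) :
    Real.log (mono x μ) / L = dot (fun i ↦ Real.log (x i) / L) μ := by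
  rw [mono, dot, Real.log_prod fun i _ ↦ (Real.rpow_pos_of_pos (hx i) _).ne', Finset.sum_div]
  refine Finset.sum_congr rfl fun i _ ↦ ?_
  rw [Real.log_rpow (hx i), mul_comm, mul_div_right_comm]

theorem continuous_dot_left (μ : Fin n → ℝ) : Continuous fun v ↦ dot v μ := by
  unfold dot
  fun_prop

theorem convex_setOf_dot_le (v : Fin n → ℝ) (r : ℝ) : Convex ℝ {μ | dot v μ ≤ r} :=
  convex_halfSpace_le ⟨dotProduct_add v, fun a μ ↦ dotProduct_smul a v μ⟩ r

theorem mem_faceAt_iff_of_mem_supp {f : Signomial n} {v μ : Fin n → ℝ} (hμ : μ ∈ f.supp) :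
    μ ∈ f.faceAt v ↔ ∀ ν ∈ f.supp, dot v ν ≤ dot v μ :=
  ⟨fun h ν hν ↦ h.2 ν (subset_convexHull ℝ _ hν), fun h ↦
    ⟨subset_convexHull ℝ _ hμ, convexHull_min h (convex_setOf_dot_le v _)⟩⟩

section Trop

variable {S T : Set (Fin n → ℝ)}

theorem trop_mono (h : S ⊆ T) : trop S ⊆ trop T :=
  fun _ ⟨x, t, hx, hlim⟩ ↦ ⟨x, t, fun m ↦ h (hx m), hlim⟩

theorem mem_trop_of_frequently {w : Fin n → ℝ} {x : ℕ → Fin n → ℝ} {t : ℕ → ℝ}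
    (hx : ∃ᶠ m in atTop, x m ∈ S) (ht : ∀ m, 1 < t m) (ht_top : Tendsto t atTop atTop)
    (hw : Tendsto (fun m i ↦ Real.log (x m i) / Real.log (t m)) atTop (𝓝 w)) : w ∈ trop S := by
  obtain ⟨φ, hφ, hxφ⟩ := extraction_of_frequently_atTop hx
  exact ⟨x ∘ φ, t ∘ φ, hxφ, fun m ↦ ht (φ m), ht_top.comp hφ.tendsto_atTop,
    hw.comp hφ.tendsto_atTop⟩

theorem trop_biUnion {ι : Type*} {s : Set ι} (hs : s.Finite) (S : ι → Set (Fin n → ℝ)) :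
    trop (⋃ i ∈ s, S i) = ⋃ i ∈ s, trop (S i) := by
  refine Set.Subset.antisymm ?_
    (Set.iUnion₂_subset fun i hi ↦ trop_mono (Set.subset_biUnion_of_mem hi))
  rintro w ⟨x, t, hx, ht, ht_top, hw⟩
  have hfreq : ∃ᶠ m in atTop, ∃ i ∈ s, x m ∈ S i :=
    Frequently.of_forall fun m ↦ by simpa only [Set.mem_iUnion₂, exists_prop] using hx m
  obtain ⟨i, hi, hxi⟩ := hs.frequently_exists.1 hfreq
  exact Set.mem_biUnion hi (mem_trop_of_frequently hxi ht ht_top hw)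

theorem dot_le_dot_of_mem_trop {w ν μ : Fin n → ℝ} {a C : ℝ} (ha : 0 < a) (hS : S ⊆ posOrth n)
    (hle : ∀ x ∈ S, a * mono x ν ≤ C * mono x μ) (hw : w ∈ trop S) : dot w ν ≤ dot w μ := by
  obtain ⟨x, t, hx, ht, ht_top, hlim⟩ := hw
  have hν_pos m : 0 < mono (x m) ν := mono_pos (hS (hx m)) ν
  have hμ_pos m : 0 < mono (x m) μ := mono_pos (hS (hx m)) μ
  have hC : 0 < C :=
    pos_of_mul_pos_left ((mul_pos ha (hν_pos 0)).trans_le (hle _ (hx 0))) (hμ_pos 0).le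
  set u : ℕ → Fin n → ℝ := fun m i ↦ Real.log (x m i) / Real.log (t m)
  have hlog_le m : Real.log a / Real.log (t m) + dot (u m) ν
      ≤ Real.log C / Real.log (t m) + dot (u m) μ := by
    rw [← log_mono_div (hS (hx m)), ← log_mono_div (hS (hx m)), ← add_div, ← add_div,
      ← Real.log_mul ha.ne' (hν_pos m).ne', ← Real.log_mul hC.ne' (hμ_pos m).ne']
    exact div_le_div_of_nonneg_right (Real.log_le_log (mul_pos ha (hν_pos m)) (hle _ (hx m)))
      (Real.log_pos (ht m)).le
  have hlim_add (b : ℝ) (κ : Fin n → ℝ) :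
      Tendsto (fun m ↦ b / Real.log (t m) + dot (u m) κ) atTop (𝓝 (dot w κ)) := by
    simpa only [zero_add, Function.comp_def] using
      ((Real.tendsto_log_atTop.comp ht_top).const_div_atTop b).add
        (((continuous_dot_left κ).tendsto w).comp hlim)
  exact le_of_tendsto_of_tendsto' (hlim_add _ ν) (hlim_add _ μ) hlog_le

end Trop

/-- The points of the positive orthant at which `x ^ μ` dominates every term of `f`, up to the
constant `∑ κ, |c_κ|`. For `μ` ranging over `σ₋(f)`, these sets cover `f⁻¹(ℝ_{<0})`. -/
def dominatedSet (f : Signomial n) (μ : Fin n → ℝ) : Set (Fin n → ℝ) :=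
  {x ∈ posOrth n | ∀ ν ∈ f.supp, |f.coeff ν| * mono x ν ≤ (∑ κ ∈ f.supp, |f.coeff κ|) * mono x μ}

theorem negSet₁_subset_biUnion_dominatedSet (f : Signomial n) :
    negSet₁ f ⊆ ⋃ μ ∈ {μ | μ ∈ f.supp ∧ f.coeff μ < 0}, f.dominatedSet μ := by
  rintro x ⟨hx, hfx⟩
  obtain ⟨μ, hμ, hneg, hle⟩ :=
    exists_neg_forall_abs_mul_le_of_sum_mul_neg (fun μ _ ↦ (mono_pos hx μ).le) hfx
  exact Set.mem_biUnion ⟨hμ, hneg⟩ ⟨hx, hle⟩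

theorem mem_faceAt_of_mem_trop_dominatedSet {f : Signomial n} {μ w : Fin n → ℝ} (hμ : μ ∈ f.supp)
    (hw : w ∈ trop (f.dominatedSet μ)) : μ ∈ f.faceAt w :=
  (mem_faceAt_iff_of_mem_supp hμ).2 fun ν hν ↦
    dot_le_dot_of_mem_trop (abs_pos.2 (f.coeff_ne_zero ν hν)) (fun _ hx ↦ hx.1)
      (fun _ hx ↦ hx.2 ν hν) hw

theorem trop_negSet₁_subset_negCone (f : Signomial n) : trop (negSet₁ f) ⊆ negCone f := by
  have hfin : {μ | μ ∈ f.supp ∧ f.coeff μ < 0}.Finite := f.supp.finite_toSet.subset fun _ h ↦ h.1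
  intro w hw
  have hw_union := trop_mono f.negSet₁_subset_biUnion_dominatedSet hw
  rw [trop_biUnion hfin] at hw_union
  obtain ⟨μ, ⟨hμ, hneg⟩, hwμ⟩ := Set.mem_iUnion₂.1 hw_union
  exact ⟨μ, hμ, hneg, mem_faceAt_of_mem_trop_dominatedSet hμ hwμ⟩

theorem negSet_subset_negSet₁ {k : ℕ} (f : Fin k → Signomial n) (i : Fin k) :
    negSet f ⊆ negSet₁ (f i) :=
  fun _ hx ↦ ⟨hx.1, hx.2 i⟩

end Signomial

open Signomial in
/-- `Trop(S(f₁, …, f_k)) ⊆ ⋂ᵢ N_{fᵢ}^-`. -/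
theorem trop_subset_negCones {n k : ℕ} (f : Fin k → Signomial n) :
    trop (negSet f) ⊆ ⋂ i, negCone (f i) :=
  Set.subset_iInter fun i ↦
    (trop_mono (negSet_subset_negSet₁ f i)).trans (trop_negSet₁_subset_negCone (f i))
end
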